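/- (Theorem 17, Blind IA, femtocell projection in the special case L = 1.) Let T, N, K, M, M_r be positive integers. Let v₁,…,v_K be 1×T complex row vectors (macrocell beamforming vectors, V_i = (a/√N)(v_iᵀ ⊗ I_N)); let ξ₁,…,ξ_T be 1×T row vectors, r₁,…,r_T be N×p_i complex matrices and q₁,…,q_T be p_i×M complex matrices (for appropriate inner dimensions p_i), and V^f = (b/√N)·Σ_{i=1}^{T} (ξ_iᵀ ⊗ (r_i·q_i)). Let h_f be an M_r×N complex channel matrix, h_A an M_r×N complex interference channel matrix, γ_f, γ_A > 0 reals, w a 1×T complex row vector with w·v_iᵀ = 0 for all i ∈ {1,…,K}, and W an M×M_r complex matrix. Let U ∈ ℂ^M, u₁,…,u_K ∈ ℂ^N, Z ∈ ℂ^{M_r·T}, and define y = √γ_f·(I_T ⊗ h_f)·V^f·U + √γ_A·(I_T ⊗ h_A)·Σ_{i=1}^{K} V_i·u_i + Z, and P = w ⊗ W. Then P·y = (b/√N)·(√γ_f·W·h_f)·(Σ_{i=1}^{T} (w·ξ_iᵀ)·r_i·q_i)·U + P·Z; i.e. P removes all inter-cell interference from the macrocell at the femtocell receiver, leaving the effective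 channel 𝓗 = (b/√N)·𝒦·𝒟 with 𝒦 = √γ_f·W·h_f and 𝒟 = Σ_i (w·ξ_iᵀ)·r_i·q_i. -/

import Mathlib

open Matrix
open scoped Kronecker

/-!
Both halves of the claim come from the mixed-product rule `(A ⊗ B)(C ⊗ D) = AC ⊗ BD`: the projection
`w ⊗ W` acts on time slots through `w` and on antennas through `W`. Each macrocell term acquires the
factor `w vᵢᵀ = 0`, whatever the channel, while each femtocell term acquires the `1 × 1` matrix
`w ξᵢᵀ`, a scalar that can be moved onto the antenna factor.
-/

section Kronecker

variable {R ι l m n o l' m' n' : Type*}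

theorem kronecker_sum [NonUnitalNonAssocSemiring R] (s : Finset ι)
    (A : Matrix l m R) (B : ι → Matrix l' m' R) :
    A ⊗ₖ (∑ i ∈ s, B i) = ∑ i ∈ s, A ⊗ₖ B i := by
  ext ⟨_, _⟩ ⟨_, _⟩
  simp only [kronecker_apply, Matrix.sum_apply, Finset.mul_sum]

theorem kronecker_eq_one_kronecker_smul [NonAssocSemiring R] [Unique o] [DecidableEq o]
    (A : Matrix o o R) (B : Matrix m n R) :
    A ⊗ₖ B = (1 : Matrix o o R) ⊗ₖ (A default default • B) := by
  ext ⟨i, _⟩ ⟨j, _⟩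
  obtain rfl := Unique.eq_default i
  obtain rfl := Unique.eq_default j
  simp only [kronecker_apply, one_apply_eq, one_mul, Matrix.smul_apply, smul_eq_mul]

variable [CommSemiring R]

theorem kronecker_mul_one_kronecker [Fintype m] [DecidableEq m] [Fintype m']
    (A : Matrix l m R) (B : Matrix l' m' R) (C : Matrix m' n' R) :
    (A ⊗ₖ B) * ((1 : Matrix m m R) ⊗ₖ C) = A ⊗ₖ (B * C) := by
  rw [← mul_kronecker_mul, Matrix.mul_one]

theorem kronecker_mul_kronecker_eq_zero [Fintype m] [Fintype m']
    {A : Matrix l m R} {C : Matrix m n R} (hAC : A * C = 0)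
    (B : Matrix l' m' R) (D : Matrix m' n' R) :
    (A ⊗ₖ B) * (C ⊗ₖ D) = 0 := by
  rw [← mul_kronecker_mul, hAC, zero_kronecker]

theorem kronecker_mul_sum_kronecker [Unique o] [DecidableEq o] [Fintype m] [Fintype m']
    (s : Finset ι) (A : Matrix o m R) (B : Matrix l' m' R)
    (C : ι → Matrix m o R) (D : ι → Matrix m' n' R) :
    (A ⊗ₖ B) * ∑ i ∈ s, C i ⊗ₖ D i =
      (1 : Matrix o o R) ⊗ₖ (B * ∑ i ∈ s, (A * C i) default default • D i) :=
  calc (A ⊗ₖ B) * ∑ i ∈ s, C i ⊗ₖ D i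
      = ∑ i ∈ s, (A * C i) ⊗ₖ (B * D i) := by
        simp only [Matrix.mul_sum, mul_kronecker_mul]
    _ = ∑ i ∈ s, (1 : Matrix o o R) ⊗ₖ ((A * C i) default default • (B * D i)) := by
        simp only [← kronecker_eq_one_kronecker_smul]
    _ = (1 : Matrix o o R) ⊗ₖ (B * ∑ i ∈ s, (A * C i) default default • D i) := by
        simp only [Matrix.mul_sum, Matrix.mul_smul, kronecker_sum]

end Kronecker

/-- The index types are `τ` for time slots, `n` and `k` for transmit and receive antennas, `m` for
messages and `o` for the single row of `w`, `v i` and `ξ i`; the gains `a`, `b`, `gf`, `gA` stand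
for `a/√N`, `b/√N`, `√γ_f`, `√γ_A`. -/
theorem blindIA_femtocell_projection_L_eq_one_general
    {R τ n k m o ι κ c : Type*} {p : κ → Type*} [CommSemiring R]
    [Fintype τ] [DecidableEq τ] [Fintype n] [DecidableEq n] [Fintype k] [Fintype m]
    [Unique o] [Fintype o] [DecidableEq o] [Fintype ι] [Fintype κ] [∀ i, Fintype (p i)]
    {a b gf gA : R}
    {v : ι → Matrix o τ R} {V : ι → Matrix (τ × n) (o × n) R}
    (hV : ∀ i, V i = a • ((v i)ᵀ ⊗ₖ (1 : Matrix n n R)))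
    {ξ : κ → Matrix o τ R} {r : (i : κ) → Matrix n (p i) R} {q : (i : κ) → Matrix (p i) m R}
    {Vf : Matrix (τ × n) (o × m) R}
    (hVf : Vf = b • ∑ i, (ξ i)ᵀ ⊗ₖ (r i * q i))
    {hf hA : Matrix k n R} {w : Matrix o τ R} {W : Matrix m k R}
    (hwv : ∀ i, w * (v i)ᵀ = 0)
    {U : Matrix (o × m) c R} {u : ι → Matrix (o × n) c R} {Z y : Matrix (τ × k) c R}
    (hy : y = gf • (((1 : Matrix τ τ R) ⊗ₖ hf) * (Vf * U))
      + gA • (((1 : Matrix τ τ R) ⊗ₖ hA) * ∑ i, V i * u i) + Z)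
    {P : Matrix (o × m) (τ × k) R} (hP : P = w ⊗ₖ W) :
    P * y = b • (((1 : Matrix o o R) ⊗ₖ
        ((gf • (W * hf)) * ∑ i, (w * (ξ i)ᵀ) default default • (r i * q i))) * U)
      + P * Z := by
  have through_channel (h : Matrix k n R) (x : Matrix (τ × n) c R) :
      P * (((1 : Matrix τ τ R) ⊗ₖ h) * x) = (w ⊗ₖ (W * h)) * x := by
    rw [hP, ← Matrix.mul_assoc, kronecker_mul_one_kronecker]
  have interference : (w ⊗ₖ (W * hA)) * ∑ i, V i * u i = 0 := by
    rw [Matrix.mul_sum]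
    refine Finset.sum_eq_zero fun i _ => ?_
    rw [hV, ← Matrix.mul_assoc, Matrix.mul_smul, kronecker_mul_kronecker_eq_zero (hwv i),
      smul_zero, Matrix.zero_mul]
  have signal : (w ⊗ₖ (W * hf)) * Vf = b • ((1 : Matrix o o R) ⊗ₖ
      ((W * hf) * ∑ i, (w * (ξ i)ᵀ) default default • (r i * q i))) := by
    rw [hVf, Matrix.mul_smul, kronecker_mul_sum_kronecker]
  rw [hy, Matrix.mul_add, Matrix.mul_add, Matrix.mul_smul, Matrix.mul_smul, through_channel,
    through_channel, interference, smul_zero, add_zero, ← Matrix.mul_assoc, signal]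
  simp only [Matrix.smul_mul, kronecker_smul, smul_comm gf b]

/-- Theorem 17, Blind IA, femtocell projection in the special case
`L = 1`: the projection `P = w ⊗ W` removes all inter-cell interference from the
macrocell at the femtocell receiver, leaving the effective channel
`(b/√N)·(√γ_f·W·h_f)·(Σ_i (w·ξ_iᵀ)·r_i·q_i)` acting on the data `U`. Here the
antenna-selection matrices `r_i` are `N × p_i` and the message-selection matrices
`q_i` are `p_i × M`, with inner dimensions `p i` varying with `i`. -/
theorem blindIA_femtocell_projection_L_eq_one
    (T N K M Mr : ℕ) (hT : 0 < T) (hN : 0 < N) (hK : 0 < K) (hM : 0 < M)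
    (hMr : 0 < Mr)
    (a b : ℝ) (hapos : 0 < a) (hbpos : 0 < b)
    (γf γA : ℝ) (hγf : 0 < γf) (hγA : 0 < γA)
    -- macrocell beamforming
    (v : Fin K → Matrix (Fin 1) (Fin T) ℂ)
    (V : Fin K → Matrix (Fin T × Fin N) (Fin 1 × Fin N) ℂ)
    (hV : ∀ i, V i = ((a / Real.sqrt N : ℝ) : ℂ) •
      ((v i)ᵀ ⊗ₖ (1 : Matrix (Fin N) (Fin N) ℂ)))
    -- femtocell beamforming with varying inner dimensions
    (p : Fin T → ℕ)
    (ξ : Fin T → Matrix (Fin 1) (Fin T) ℂ)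
    (r : (i : Fin T) → Matrix (Fin N) (Fin (p i)) ℂ)
    (q : (i : Fin T) → Matrix (Fin (p i)) (Fin M) ℂ)
    (Vf : Matrix (Fin T × Fin N) (Fin 1 × Fin M) ℂ)
    (hVf : Vf = ((b / Real.sqrt N : ℝ) : ℂ) •
      ∑ i : Fin T, ((ξ i)ᵀ ⊗ₖ (r i * q i)))
    -- channels (the femtocell receiver has Mr antennas)
    (hf hA : Matrix (Fin Mr) (Fin N) ℂ)
    -- projection building blocks and orthogonality assumption
    (w : Matrix (Fin 1) (Fin T) ℂ) (W : Matrix (Fin M) (Fin Mr) ℂ)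
    (hwv : ∀ i : Fin K, w * (v i)ᵀ = 0)
    -- data, noise, received signal, projection
    (U : Matrix (Fin 1 × Fin M) (Fin 1) ℂ)
    (u : Fin K → Matrix (Fin 1 × Fin N) (Fin 1) ℂ)
    (Z : Matrix (Fin T × Fin Mr) (Fin 1) ℂ)
    (y : Matrix (Fin T × Fin Mr) (Fin 1) ℂ)
    (hy : y = (Real.sqrt γf : ℂ) •
            (((1 : Matrix (Fin T) (Fin T) ℂ) ⊗ₖ hf) * (Vf * U))
        + (Real.sqrt γA : ℂ) •
            (((1 : Matrix (Fin T) (Fin T) ℂ) ⊗ₖ hA) * (∑ i : Fin K, V i * u i))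
        + Z)
    (P : Matrix (Fin 1 × Fin M) (Fin T × Fin Mr) ℂ)
    (hP : P = w ⊗ₖ W) :
    P * y = ((b / Real.sqrt N : ℝ) : ℂ) •
      (((1 : Matrix (Fin 1) (Fin 1) ℂ) ⊗ₖ
          (((Real.sqrt γf : ℂ) • (W * hf)) *
            (∑ i : Fin T, (w * (ξ i)ᵀ) 0 0 • (r i * q i)))) * U)
      + P * Z := by
  exact blindIA_femtocell_projection_L_eq_one_general hV hVf hwv hy hP
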